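/- Let R be a Gorenstein ring (i.e., R_p is a Gorenstein local ring for every prime p). Let Y and Z be resolving subcategories of mod R with Y ⊆ PD(R) and Z ⊆ MCM(R). Then Y = res(Y ∪ Z) ∩ PD(R) and Z = res(Y ∪ Z) ∩ MCM(R). -/

import Mathlib

universe u

open CategoryTheory

namespace ResolvPaper

variable (R : Type u) [CommRing R]

/-- `IsSES f g` means `0 → A → B → C → 0` is a short exact sequence. -/
def IsSES {R : Type u} [CommRing R] {A B C : Type u} [AddCommGroup A] [Module R A]
    [AddCommGroup B] [Module R B] [AddCommGroup C] [Module R C]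
    (f : A →ₗ[R] B) (g : B →ₗ[R] C) : Prop :=
  Function.Injective f ∧ Function.Surjective g ∧ LinearMap.range f = LinearMap.ker g

/-- A resolving subcategory of `mod R`, viewed as a set of bundled modules
closed under isomorphism, containing the finitely generated projective modules, and closed
under direct summands, extensions and syzygies. -/
structure IsResolving (𝒳 : Set (ModuleCat.{u} R)) : Prop where
  fg : ∀ M ∈ 𝒳, Module.Finite R M
  iso_closed : ∀ M N : ModuleCat.{u} R, Nonempty (M ≃ₗ[R] N) → M ∈ 𝒳 → N ∈ 𝒳
  proj_mem : ∀ M : ModuleCat.{u} R, Module.Finite R M → Module.Projective R M → M ∈ 𝒳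
  summand_closed : ∀ M N : ModuleCat.{u} R, ModuleCat.of R (↥M × ↥N) ∈ 𝒳 → M ∈ 𝒳
  ext_closed : ∀ (A B C : ModuleCat.{u} R) (f : A →ₗ[R] B) (g : B →ₗ[R] C),
    IsSES f g → A ∈ 𝒳 → C ∈ 𝒳 → B ∈ 𝒳
  syzygy_closed : ∀ (K P M : ModuleCat.{u} R) (f : K →ₗ[R] P) (g : P →ₗ[R] M),
    IsSES f g → Module.Finite R K → Module.Finite R P → Module.Projective R P →
    M ∈ 𝒳 → K ∈ 𝒳

/-- The resolving closure: the smallest resolving subcategory containing `S`. -/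
def resClosure (S : Set (ModuleCat.{u} R)) : Set (ModuleCat.{u} R) :=
  ⋂₀ {𝒳 | IsResolving R 𝒳 ∧ S ⊆ 𝒳}

/-- An extension-closed subcategory of `mod R`: closed under isomorphism,
direct summands and extensions. -/
def IsExtClosed (𝒳 : Set (ModuleCat.{u} R)) : Prop :=
  (∀ M N : ModuleCat.{u} R, Nonempty (M ≃ₗ[R] N) → M ∈ 𝒳 → N ∈ 𝒳) ∧
  (∀ M N : ModuleCat.{u} R, ModuleCat.of R (↥M × ↥N) ∈ 𝒳 → M ∈ 𝒳) ∧
  (∀ (A B C : ModuleCat.{u} R) (f : A →ₗ[R] B) (g : B →ₗ[R] C),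
    IsSES f g → A ∈ 𝒳 → C ∈ 𝒳 → B ∈ 𝒳)

/-- The extension closure of a set of modules. -/
def extClosure (S : Set (ModuleCat.{u} R)) : Set (ModuleCat.{u} R) :=
  ⋂₀ {𝒳 | IsExtClosed R 𝒳 ∧ S ⊆ 𝒳}

/-- `add R`: direct summands of finite free modules. -/
def addR : Set (ModuleCat.{u} R) :=
  {M | ∃ (n : ℕ) (N : ModuleCat.{u} R), Nonempty ((↥M × ↥N) ≃ₗ[R] (Fin n → R))}

/-- `pdLE n M` : the projective dimension of `M` is at most `n`. -/
def pdLE : ℕ → ModuleCat.{u} R → Prop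
  | 0, M => Module.Projective R M
  | n+1, M => ∃ (K P : ModuleCat.{u} R) (f : K →ₗ[R] P) (g : P →ₗ[R] M),
      Module.Finite R P ∧ Module.Projective R P ∧ IsSES f g ∧ pdLE n K

/-- The projective dimension, an element of `WithBot ℕ∞`; the zero module
has projective dimension `⊥ = -∞`. -/
noncomputable def pdim (M : ModuleCat.{u} R) : WithBot ℕ∞ :=
  sInf {x : WithBot ℕ∞ | (x = ⊥ ∧ Subsingleton M) ∨ ∃ n : ℕ, x = (n : ℕ∞) ∧ pdLE R n M}

/-- The depth of `M` with respect to the ideal `I`: the supremum of lengths of weakly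
`M`-regular sequences contained in `I`.  The zero module has depth `∞`. -/
noncomputable def depthE (I : Ideal R) (M : Type u) [AddCommGroup M] [Module R M] : ℕ∞ :=
  sSup {x : ℕ∞ | ∃ rs : List R, (∀ r ∈ rs, r ∈ I) ∧
    RingTheory.Sequence.IsWeaklyRegular M rs ∧ x = rs.length}

/-- The grade of an ideal: the length of a maximal `R`-regular sequence in `I`. -/
noncomputable def gradeE (I : Ideal R) : ℕ∞ := depthE R I R

/-- A grade consistent function on `Spec R`. -/
def GradeConsistent (f : PrimeSpectrum R → ℕ) : Prop :=
  (∀ p : PrimeSpectrum R, (f p : ℕ∞) ≤ gradeE R p.asIdeal) ∧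
  (∀ p q : PrimeSpectrum R, p.asIdeal ≤ q.asIdeal → f p ≤ f q)

/-- The localization of a module at a prime, as a module over the local ring `R_p`. -/
noncomputable abbrev localizeM (p : PrimeSpectrum R) (M : ModuleCat.{u} R) :
    ModuleCat.{u} (Localization.AtPrime p.asIdeal) :=
  ModuleCat.of (Localization.AtPrime p.asIdeal) (LocalizedModule p.asIdeal.primeCompl M)

/-- `pd_{R_p} M_p`. -/
noncomputable def localPdim (p : PrimeSpectrum R) (M : ModuleCat.{u} R) : WithBot ℕ∞ :=
  pdim (Localization.AtPrime p.asIdeal) (localizeM R p M)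

/-- `depth_{R_p} M_p`. -/
noncomputable def localDepth (p : PrimeSpectrum R) (M : ModuleCat.{u} R) : ℕ∞ :=
  depthE (Localization.AtPrime p.asIdeal)
    (IsLocalRing.maximalIdeal (Localization.AtPrime p.asIdeal))
    (LocalizedModule p.asIdeal.primeCompl M)

/-- The height of a prime ideal. -/
noncomputable def heightE (p : PrimeSpectrum R) : ℕ∞ := Order.height p

/-- `PD(R)` : finitely generated modules of finite projective dimension. -/
def PDcat : Set (ModuleCat.{u} R) :=
  {M | Module.Finite R M ∧ ∃ n : ℕ, pdLE R n M}

/-- `MCM(R)` : maximal Cohen-Macaulay modules. -/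
def MCMcat : Set (ModuleCat.{u} R) :=
  {M | Module.Finite R M ∧ ∀ p : PrimeSpectrum R, heightE R p ≤ localDepth R p M}

/-- The nonfree locus of a module. -/
def NF (M : ModuleCat.{u} R) : Set (PrimeSpectrum R) :=
  {p | ¬ Module.Free (Localization.AtPrime p.asIdeal) (LocalizedModule p.asIdeal.primeCompl M)}

/-- The infinite projective dimension locus of a module. -/
def IPD (M : ModuleCat.{u} R) : Set (PrimeSpectrum R) :=
  {p | localPdim R p M = (⊤ : WithBot ℕ∞)}

/-- The infinite projective dimension locus of a collection of modules. -/
def IPDcat (𝒳 : Set (ModuleCat.{u} R)) : Set (PrimeSpectrum R) :=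
  ⋃ M ∈ 𝒳, IPD R M

/-- The modules in `mod R` whose infinite projective dimension locus lies in `W`. -/
def IPDinv (W : Set (PrimeSpectrum R)) : Set (ModuleCat.{u} R) :=
  {M | Module.Finite R M ∧ IPD R M ⊆ W}

/-- A specialization closed subset of `Spec R`. -/
def SpecClosed (W : Set (PrimeSpectrum R)) : Prop :=
  ∀ p ∈ W, ∀ q : PrimeSpectrum R, p.asIdeal ≤ q.asIdeal → q ∈ W

/-- Membership in `add 𝒳_p`: direct summands of localizations of finite direct sums
of members of `𝒳`. -/
def memAddLocal (𝒳 : Set (ModuleCat.{u} R)) (p : PrimeSpectrum R)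
    (N : ModuleCat.{u} (Localization.AtPrime p.asIdeal)) : Prop :=
  ∃ (n : ℕ) (X : Fin n → ModuleCat.{u} R), (∀ i, X i ∈ 𝒳) ∧
    ∃ (N' : ModuleCat.{u} (Localization.AtPrime p.asIdeal)),
      Nonempty ((↥N × ↥N') ≃ₗ[Localization.AtPrime p.asIdeal]
        ((i : Fin n) → LocalizedModule p.asIdeal.primeCompl (X i)))

/-- `K` is an `n`-th syzygy of `M` computed from a minimal free resolution over the
local ring `S`. -/
def IsMinSyz (S : Type u) [CommRing S] [IsLocalRing S] :
    ℕ → ModuleCat.{u} S → ModuleCat.{u} S → Prop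
  | 0, M, K => Nonempty (K ≃ₗ[S] M)
  | n+1, M, K => ∃ (F : ModuleCat.{u} S) (g : F →ₗ[S] M) (K' : ModuleCat.{u} S)
      (i : K' →ₗ[S] F),
      Module.Finite S F ∧ Module.Free S F ∧ Function.Surjective g ∧
      (LinearMap.ker g ≤ (IsLocalRing.maximalIdeal S) • (⊤ : Submodule S F)) ∧
      Function.Injective i ∧ LinearMap.range i = LinearMap.ker g ∧
      IsMinSyz S n K' K

/-- `K` is an `n`-th syzygy of `M` in some projective resolution (over any ring). -/
def IsSyz : ℕ → ModuleCat.{u} R → ModuleCat.{u} R → Prop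
  | 0, M, K => Nonempty (K ≃ₗ[R] M)
  | n+1, M, K => ∃ (F : ModuleCat.{u} R) (g : F →ₗ[R] M) (K' : ModuleCat.{u} R)
      (i : K' →ₗ[R] F),
      Module.Finite R F ∧ Module.Projective R F ∧ Function.Surjective g ∧
      Function.Injective i ∧ LinearMap.range i = LinearMap.ker g ∧
      IsSyz n K' K

/-- `T` is (isomorphic to) the Auslander transpose of `M`, computed from a minimal
free presentation over the local ring `S`. -/
def IsTranspose (S : Type u) [CommRing S] [IsLocalRing S] (M T : ModuleCat.{u} S) : Prop :=
  ∃ (F1 F0 : ModuleCat.{u} S) (d : F1 →ₗ[S] F0) (e : F0 →ₗ[S] M),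
    Module.Finite S F0 ∧ Module.Free S F0 ∧ Module.Finite S F1 ∧ Module.Free S F1 ∧
    Function.Surjective e ∧ LinearMap.range d = LinearMap.ker e ∧
    LinearMap.ker e ≤ (IsLocalRing.maximalIdeal S) • (⊤ : Submodule S F0) ∧
    LinearMap.ker d ≤ (IsLocalRing.maximalIdeal S) • (⊤ : Submodule S F1) ∧
    Nonempty (T ≃ₗ[S] ((Module.Dual S F1) ⧸ LinearMap.range d.dualMap))

/-- `T` is (isomorphic to) `Tr Ω^n M` over the local ring `S`. -/
def IsTrOmega (S : Type u) [CommRing S] [IsLocalRing S] (n : ℕ) (M T : ModuleCat.{u} S) :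
    Prop :=
  ∃ K : ModuleCat.{u} S, IsMinSyz S n M K ∧ IsTranspose S K T

/-- Resolving subcategory `𝒳` is dominant on `W ⊆ Spec R`. -/
def DominantOn (𝒳 : Set (ModuleCat.{u} R)) (W : Set (PrimeSpectrum R)) : Prop :=
  ∀ p ∈ W, ∃ (n : ℕ) (K : ModuleCat.{u} (Localization.AtPrime p.asIdeal)),
    IsMinSyz (Localization.AtPrime p.asIdeal) n
      (ModuleCat.of (Localization.AtPrime p.asIdeal)
        (IsLocalRing.ResidueField (Localization.AtPrime p.asIdeal))) K ∧
    memAddLocal R 𝒳 p K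

/-- Dominant resolving subcategory. -/
def Dominant (𝒳 : Set (ModuleCat.{u} R)) : Prop := DominantOn R 𝒳 Set.univ

/-- A (noetherian) local ring is Cohen-Macaulay if its depth equals its Krull dimension. -/
def IsCMLocalRing (S : Type u) [CommRing S] [IsLocalRing S] : Prop :=
  IsNoetherianRing S ∧
    ((depthE S (IsLocalRing.maximalIdeal S) S : WithBot ℕ∞) = ringKrullDim S)

/-- A regular local ring: a noetherian local ring whose maximal ideal is generated by
`dim S` elements. -/
def IsRegLocalRing (S : Type u) [CommRing S] [IsLocalRing S] : Prop :=
  IsNoetherianRing S ∧ ∃ s : Finset S,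
    Ideal.span (s : Set S) = IsLocalRing.maximalIdeal S ∧
    ringKrullDim S = (s.card : WithBot ℕ∞)

/-- The singular locus of `R`. -/
def SingLocus : Set (PrimeSpectrum R) :=
  {p | ¬ IsRegLocalRing (Localization.AtPrime p.asIdeal)}

/-- A hypersurface local ring: the completion is a quotient of a regular local ring by
one element. -/
def IsHypersurfaceLocalRing (S : Type u) [CommRing S] [IsLocalRing S] : Prop :=
  ∃ (T : Type u) (_ : CommRing T) (_ : IsLocalRing T) (f : T),
    IsRegLocalRing T ∧
    Nonempty ((AdicCompletion (IsLocalRing.maximalIdeal S) S) ≃+* (T ⧸ Ideal.span {f}))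

/-- A complete intersection local ring: the completion is a quotient of a regular local
ring by a regular sequence. -/
def IsCompleteIntersectionLocalRing (S : Type u) [CommRing S] [IsLocalRing S] : Prop :=
  ∃ (T : Type u) (_ : CommRing T) (_ : IsLocalRing T) (rs : List T),
    IsRegLocalRing T ∧ RingTheory.Sequence.IsRegular T rs ∧
    Nonempty ((AdicCompletion (IsLocalRing.maximalIdeal S) S) ≃+*
      (T ⧸ Ideal.ofList rs))

/-- The subquotient `A / (A ⊓ B)` of two submodules, used for homology. -/
def subquot {S M : Type u} [CommRing S] [AddCommGroup M] [Module S M]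
    (A B : Submodule S M) : Type u :=
  A ⧸ (B.comap A.subtype)

noncomputable instance {S M : Type u} [CommRing S] [AddCommGroup M] [Module S M]
    (A B : Submodule S M) : AddCommGroup (subquot A B) :=
  inferInstanceAs (AddCommGroup (A ⧸ (B.comap A.subtype)))

noncomputable instance {S M : Type u} [CommRing S] [AddCommGroup M] [Module S M]
    (A B : Submodule S M) : Module S (subquot A B) :=
  inferInstanceAs (Module S (A ⧸ (B.comap A.subtype)))

/-- `E` is (isomorphic to) `Ext^{j+1}_S(M, S)`, computed from a finite free resolution. -/
def IsExtPos (S : Type u) [CommRing S] (j : ℕ) (M E : ModuleCat.{u} S) : Prop :=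
  ∃ (F : ℕ → ModuleCat.{u} S) (d : ∀ i : ℕ, (F (i+1) : Type u) →ₗ[S] F i)
    (e : (F 0 : Type u) →ₗ[S] M),
    (∀ i, Module.Finite S (F i)) ∧ (∀ i, Module.Free S (F i)) ∧
    Function.Surjective e ∧ LinearMap.range (d 0) = LinearMap.ker e ∧
    (∀ i, LinearMap.range (d (i+1)) = LinearMap.ker (d i)) ∧
    Nonempty (E ≃ₗ[S]
      subquot (LinearMap.ker ((d (j+1)).dualMap)) (LinearMap.range ((d j).dualMap)))

/-- `T` is (isomorphic to) `Tor_n^S(M, N)`, computed from a projective resolution of `M`. -/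
def IsTor (S : Type u) [CommRing S] (n : ℕ) (M N T : ModuleCat.{u} S) : Prop :=
  ∃ (F : ℕ → ModuleCat.{u} S) (d : ∀ i : ℕ, (F (i+1) : Type u) →ₗ[S] F i)
    (e : (F 0 : Type u) →ₗ[S] M),
    (∀ i, Module.Projective S (F i)) ∧
    Function.Surjective e ∧ LinearMap.range (d 0) = LinearMap.ker e ∧
    (∀ i, LinearMap.range (d (i+1)) = LinearMap.ker (d i)) ∧
    (match n with
      | 0 => Nonempty (T ≃ₗ[S] TensorProduct S M N)
      | (j+1) => Nonempty (T ≃ₗ[S]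
          subquot (LinearMap.ker (LinearMap.rTensor (↥N) (d j)))
            (LinearMap.range (LinearMap.rTensor (↥N) (d (j+1))))))

/-- `idLE n M` : the injective dimension of `M` is at most `n`. -/
def idLE (S : Type u) [CommRing S] : ℕ → ModuleCat.{u} S → Prop
  | 0, M => Module.Injective S M
  | n+1, M => ∃ (I C : ModuleCat.{u} S) (f : M →ₗ[S] I) (g : I →ₗ[S] C),
      IsSES f g ∧ Module.Injective S I ∧ idLE S n C

/-- `PD_0^n(R)` over a local ring: modules of projective dimension at most `n` that are
free on the punctured spectrum. -/
def PD0n [IsLocalRing R] (n : ℕ) : Set (ModuleCat.{u} R) :=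
  {M | Module.Finite R M ∧ pdLE R n M ∧
    ∀ p : PrimeSpectrum R, p.asIdeal ≠ IsLocalRing.maximalIdeal R →
      Module.Free (Localization.AtPrime p.asIdeal) (LocalizedModule p.asIdeal.primeCompl M)}

/-- `PD_0(R)` over a local ring: modules of finite projective dimension that are
free on the punctured spectrum. -/
def PD0 [IsLocalRing R] : Set (ModuleCat.{u} R) :=
  {M | Module.Finite R M ∧ (∃ n : ℕ, pdLE R n M) ∧
    ∀ p : PrimeSpectrum R, p.asIdeal ≠ IsLocalRing.maximalIdeal R →
      Module.Free (Localization.AtPrime p.asIdeal) (LocalizedModule p.asIdeal.primeCompl M)}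

/-- The residue field of a local ring, as a bundled module. -/
noncomputable abbrev residueMod (S : Type u) [CommRing S] [IsLocalRing S] : ModuleCat.{u} S :=
  ModuleCat.of S (IsLocalRing.ResidueField S)

/-!
Over a Gorenstein ring `Ext^i(Z, Y) = 0` for `i > 0` whenever `Z` is maximal Cohen-Macaulay and `Y`
has finite projective dimension. By dévissage this is `Ext^i(Z, R) = 0`, which is a local question;
over a local ring of dimension `d` and finite self-injective dimension, `Ext^i(-, R)` vanishes on
finitely generated modules for `i > d`, and a weakly `Z`-regular sequence of length `d` brings the
vanishing down to `i > 0`.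

Since `Ext^1(Z, Y) = 0` for `Z ∈ 𝒵` and `Y ∈ 𝒴`, extensions of a `Z` by a `Y` split, so that the
summands of modules `E` in short exact sequences `0 → Z → E → Y → 0` already form a resolving
subcategory, and every member `M` of `res (𝒴 ∪ 𝒵)` is a summand of such an `E`.

- If `M` has finite projective dimension, embed `Z` in a free module `F` whose cokernel `C`
  satisfies `Ext^i(C, R) = 0` for `i > 0`. The pushout `W` of `E` is an extension of `Y` by `F`,
  hence lies in `𝒴`, and `M` is a summand of it: the projection `E → M` extends to `W` as
  `Ext^1(C, M) = 0`.
- If `M` is maximal Cohen-Macaulay, cover `Y` by a free module `F` with kernel `K ∈ 𝒴`. The pullback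
  `W` of `E` is an extension of `F` by `Z`, hence lies in `𝒵`, and `M` is a summand of it: the
  inclusion `M → E` lifts to `W` as `Ext^1(M, K) = 0`.
-/

universe w

section ExtVanishing

open Abelian

variable {𝒜 : Type*} [Category* 𝒜] [Abelian 𝒜] [HasExt.{w} 𝒜] {X Y N : 𝒜} {S : ShortComplex 𝒜}
  {i : ℕ}

theorem subsingleton_ext_X₁ (hS : S.ShortExact) (h₂ : Subsingleton (Ext S.X₂ N i))
    (h₃ : Subsingleton (Ext S.X₃ N (i + 1))) : Subsingleton (Ext S.X₁ N i) :=
  subsingleton_of_forall_eq 0 fun x => by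
    obtain ⟨y, rfl⟩ :=
      Ext.contravariant_sequence_exact₁ hS N x (add_comm 1 i) (Subsingleton.elim _ _)
    rw [Subsingleton.elim y 0, Ext.comp_zero]

theorem subsingleton_ext_X₂ (hS : S.ShortExact) (h₁ : Subsingleton (Ext S.X₁ N i))
    (h₃ : Subsingleton (Ext S.X₃ N i)) : Subsingleton (Ext S.X₂ N i) :=
  subsingleton_of_forall_eq 0 fun x => by
    obtain ⟨y, rfl⟩ := Ext.contravariant_sequence_exact₂ hS N x (Subsingleton.elim _ _)
    rw [Subsingleton.elim y 0, Ext.comp_zero]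

theorem subsingleton_ext_X₃ (hS : S.ShortExact) (h₁ : Subsingleton (Ext S.X₁ N i))
    (h₂ : Subsingleton (Ext S.X₂ N (i + 1))) : Subsingleton (Ext S.X₃ N (i + 1)) :=
  subsingleton_of_forall_eq 0 fun x => by
    obtain ⟨y, rfl⟩ :=
      Ext.contravariant_sequence_exact₃ hS N x (Subsingleton.elim _ _) (add_comm 1 i)
    rw [Subsingleton.elim y 0, Ext.comp_zero]

theorem subsingleton_ext_to_X₃ (hS : S.ShortExact) (h₂ : Subsingleton (Ext N S.X₂ i))
    (h₁ : Subsingleton (Ext N S.X₁ (i + 1))) : Subsingleton (Ext N S.X₃ i) :=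
  subsingleton_of_forall_eq 0 fun x => by
    obtain ⟨y, rfl⟩ := Ext.covariant_sequence_exact₃ N hS x rfl (Subsingleton.elim _ _)
    rw [Subsingleton.elim y 0, Ext.zero_comp]

theorem subsingleton_ext_of_retract_left (h : Retract X Y) (hY : Subsingleton (Ext Y N i)) :
    Subsingleton (Ext X N i) :=
  subsingleton_of_forall_eq 0 fun x => by
    rw [← x.mk₀_id_comp, ← h.retract, ← Ext.mk₀_comp_mk₀_assoc,
      Subsingleton.elim ((Ext.mk₀ h.r).comp x _) 0, Ext.comp_zero]

theorem subsingleton_ext_of_retract_right (h : Retract X Y) (hY : Subsingleton (Ext N Y i)) :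
    Subsingleton (Ext N X i) :=
  subsingleton_of_forall_eq 0 fun x => by
    rw [← x.comp_mk₀_id, ← h.retract, ← Ext.mk₀_comp_mk₀, ← Ext.comp_assoc_of_third_deg_zero,
      Subsingleton.elim (x.comp (Ext.mk₀ h.i) _) 0, Ext.zero_comp]

theorem exists_comp_g_eq_of_subsingleton_ext_one (hS : S.ShortExact)
    (h : Subsingleton (Ext N S.X₁ 1)) (φ : N ⟶ S.X₃) : ∃ ψ : N ⟶ S.X₂, ψ ≫ S.g = φ := by
  obtain ⟨y, hy⟩ := Ext.covariant_sequence_exact₃ N hS (Ext.mk₀ φ) rfl (Subsingleton.elim _ _)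
  obtain ⟨ψ, rfl⟩ := (Ext.mk₀_bijective _ _).2 y
  exact ⟨ψ, (Ext.mk₀_bijective _ _).1 (by rw [← hy, Ext.mk₀_comp_mk₀])⟩

theorem exists_f_comp_eq_of_subsingleton_ext_one (hS : S.ShortExact)
    (h : Subsingleton (Ext S.X₃ N 1)) (φ : S.X₁ ⟶ N) : ∃ ψ : S.X₂ ⟶ N, S.f ≫ ψ = φ := by
  obtain ⟨y, hy⟩ := Ext.contravariant_sequence_exact₁ hS N (Ext.mk₀ φ) rfl (Subsingleton.elim _ _)
  obtain ⟨ψ, rfl⟩ := (Ext.mk₀_bijective _ _).2 y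
  exact ⟨ψ, (Ext.mk₀_bijective _ _).1 (by rw [← hy, Ext.mk₀_comp_mk₀])⟩

theorem subsingleton_ext_one_of_forall_exists_f_comp_eq (hS : S.ShortExact) [Projective S.X₂]
    (H : ∀ φ : S.X₁ ⟶ N, ∃ ψ : S.X₂ ⟶ N, S.f ≫ ψ = φ) : Subsingleton (Ext S.X₃ N 1) :=
  subsingleton_of_forall_eq 0 fun x => by
    obtain ⟨y, rfl⟩ :=
      Ext.contravariant_sequence_exact₃ hS N x (Ext.eq_zero_of_projective _) (add_zero 1)
    obtain ⟨φ, rfl⟩ := (Ext.mk₀_bijective _ _).2 y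
    obtain ⟨ψ, rfl⟩ := H φ
    rw [← Ext.mk₀_comp_mk₀, hS.extClass_comp_assoc]

end ExtVanishing

section ShortExactSequences

open Abelian

variable {R}

namespace IsSES

variable {A B C : Type u} [AddCommGroup A] [Module R A] [AddCommGroup B] [Module R B]
  [AddCommGroup C] [Module R C] {f : A →ₗ[R] B} {g : B →ₗ[R] C}

theorem of_exact (hf : Function.Injective f) (hg : Function.Surjective g)
    (h : Function.Exact f g) : IsSES f g :=
  ⟨hf, hg, h.linearMap_ker_eq.symm⟩

theorem exact (h : IsSES f g) : Function.Exact f g :=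
  LinearMap.exact_iff.mpr h.2.2.symm

theorem of_surjective (hg : Function.Surjective g) : IsSES (LinearMap.ker g).subtype g :=
  ⟨Subtype.val_injective, hg, Submodule.range_subtype _⟩

theorem of_injective (hf : Function.Injective f) : IsSES f (LinearMap.range f).mkQ :=
  ⟨hf, Submodule.mkQ_surjective _, (Submodule.ker_mkQ _).symm⟩

theorem inl_snd : IsSES (LinearMap.inl R A B) (LinearMap.snd R A B) :=
  of_exact LinearMap.inl_injective LinearMap.snd_surjective Function.Exact.inl_snd

theorem prodMap {A' B' C' : Type u} [AddCommGroup A'] [Module R A'] [AddCommGroup B']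
    [Module R B'] [AddCommGroup C'] [Module R C'] {f' : A' →ₗ[R] B'} {g' : B' →ₗ[R] C'}
    (h : IsSES f g) (h' : IsSES f' g') : IsSES (f.prodMap f') (g.prodMap g') :=
  ⟨h.1.prodMap h'.1, h.2.1.prodMap h'.2.1, by
    rw [LinearMap.range_prodMap, LinearMap.ker_prodMap, h.2.2, h'.2.2]⟩

/-- The short exact sequence `IsSES f g` as a short complex in the category of modules, which is
the form in which Mathlib's long exact `Ext` sequences take it. -/
abbrev shortComplex (h : IsSES f g) : ShortComplex (ModuleCat.{u} R) :=
  ModuleCat.shortComplexOfCompEqZero f g h.exact.linearMap_comp_eq_zero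

theorem shortExact (h : IsSES f g) : h.shortComplex.ShortExact where
  exact := (ShortComplex.ShortExact.moduleCat_exact_iff_function_exact _).mpr h.exact
  mono_f := (ModuleCat.mono_iff_injective _).mpr h.1
  epi_g := (ModuleCat.epi_iff_surjective _).mpr h.2.1

theorem exists_lift {M : ModuleCat.{u} R} (h : IsSES f g)
    (hM : Subsingleton (Ext M (ModuleCat.of R A) 1)) (φ : M →ₗ[R] C) :
    ∃ ψ : M →ₗ[R] B, g ∘ₗ ψ = φ := by
  obtain ⟨ψ, hψ⟩ := exists_comp_g_eq_of_subsingleton_ext_one h.shortExact hM (ModuleCat.ofHom φ)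
  exact ⟨ψ.hom, congrArg ModuleCat.Hom.hom hψ⟩

theorem exists_extension {N : ModuleCat.{u} R} (h : IsSES f g)
    (hN : Subsingleton (Ext (ModuleCat.of R C) N 1)) (φ : A →ₗ[R] N) :
    ∃ ψ : B →ₗ[R] N, ψ ∘ₗ f = φ := by
  obtain ⟨ψ, hψ⟩ := exists_f_comp_eq_of_subsingleton_ext_one h.shortExact hN (ModuleCat.ofHom φ)
  exact ⟨ψ.hom, congrArg ModuleCat.Hom.hom hψ⟩

theorem subsingleton_ext_one {N : ModuleCat.{u} R} [Module.Projective R B] (h : IsSES f g)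
    (H : ∀ φ : A →ₗ[R] N, ∃ ψ : B →ₗ[R] N, ψ ∘ₗ f = φ) :
    Subsingleton (Ext (ModuleCat.of R C) N 1) := by
  have : Projective h.shortComplex.X₂ := (IsProjective.iff_projective B).mp ‹_›
  refine subsingleton_ext_one_of_forall_exists_f_comp_eq h.shortExact fun φ => ?_
  obtain ⟨ψ, hψ⟩ := H φ.hom
  exact ⟨ModuleCat.ofHom ψ, ModuleCat.hom_ext hψ⟩

theorem exists_of_comp_eq_id (h : IsSES f g) {s : C →ₗ[R] B} (hs : g ∘ₗ s = LinearMap.id) :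
    ∃ r : B →ₗ[R] A, IsSES s r := by
  have hgs (c : C) : g (s c) = c := DFunLike.congr_fun hs c
  have hsg (b : B) : b - s (g b) ∈ LinearMap.range f :=
    h.2.2 ▸ by rw [LinearMap.mem_ker, map_sub, hgs, sub_self]
  let r : B →ₗ[R] A := (LinearEquiv.ofInjective f h.1).symm ∘ₗ
    (LinearMap.id - s ∘ₗ g).codRestrict (LinearMap.range f) hsg
  have hfr (b : B) : f (r b) = b - s (g b) :=
    LinearEquiv.ofInjective_symm_apply f (h := h.1) _
  refine ⟨r, of_exact (Function.LeftInverse.injective hgs) (fun a => ⟨f a, h.1 ?_⟩) fun b => ?_⟩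
  · rw [hfr, h.exact.apply_apply_eq_zero, map_zero, sub_zero]
  · rw [← map_eq_zero_iff f h.1, hfr, sub_eq_zero]
    exact ⟨fun hb => ⟨g b, hb.symm⟩, fun ⟨c, hc⟩ => by rw [← hc, hgs]⟩

end IsSES

theorem subsingleton_ext_of_projective (P N : ModuleCat.{u} R) [Module.Projective R P] (i : ℕ) :
    Subsingleton (Ext P N (i + 1)) := by
  have : Projective P := (IsProjective.iff_projective P).mp ‹_›
  exact HasProjectiveDimensionLT.subsingleton P 1 (i + 1) (by lia) N

theorem subsingleton_ext_of_fg_projective {M N : ModuleCat.{u} R} {i : ℕ}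
    (h : Subsingleton (Ext M (ModuleCat.of R R) i)) [Module.Finite R N] [Module.Projective R N] :
    Subsingleton (Ext M N i) := by
  obtain ⟨n, f, hf⟩ := Module.Finite.exists_fin' R N
  obtain ⟨s, hs⟩ := Module.projective_lifting_property f LinearMap.id hf
  let F : Fin n → ModuleCat.{u} R := fun _ => ModuleCat.of R R
  let retract : Retract N (ModuleCat.of R (Fin n → R)) :=
    ⟨ModuleCat.ofHom s, ModuleCat.ofHom f, ModuleCat.hom_ext hs⟩
  exact subsingleton_ext_of_retract_right
    (retract.trans (Retract.ofIso (ModuleCat.biproductIsoPi F).symm))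
    (Ext.addEquivBiproduct M (Limits.biproduct.isBilimit F) i).subsingleton

end ShortExactSequences

section InjectiveDimension

open Abelian IsLocalRing RingTheory.Sequence
open scoped Pointwise

variable {S : Type u} [CommRing S]

theorem hasInjectiveDimensionLE_of_idLE {n : ℕ} {T : ModuleCat.{u} S} (h : idLE S n T) :
    HasInjectiveDimensionLE T n := by
  induction n generalizing T with
  | zero =>
    have : Injective T := (Module.injective_iff_injective_object S T).mp h
    infer_instance
  | succ n ih =>
    obtain ⟨I, C, f, g, hfg, hI, hC⟩ := h
    have : Injective I := (Module.injective_iff_injective_object S I).mp hI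
    exact hfg.shortExact.hasInjectiveDimensionLT_X₁ (n + 1) (ih hC)
      (hasInjectiveDimensionLT_of_ge I 1 (n + 1 + 1) (by lia))

variable [IsNoetherianRing S] [IsLocalRing S]

theorem subsingleton_ext_of_quotSMulTop {M T : ModuleCat.{u} S} [Module.Finite S M]
    [Module.Finite S T] {x : S} (hx : x ∈ maximalIdeal S) (hreg : IsSMulRegular M x) {i : ℕ}
    (h : Subsingleton (Ext (ModuleCat.of S (QuotSMulTop x M)) T (i + 1))) :
    Subsingleton (Ext M T i) := by
  have hle : (⊤ : Submodule S (Ext M T i)) ≤ maximalIdeal S • ⊤ := fun e _ => by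
    obtain ⟨y, hy⟩ := Ext.contravariant_sequence_exact₁ hreg.smulShortComplex_shortExact T e
      (add_comm 1 i) (h.elim _ _)
    have hsmul (y : Ext M T i) : (Ext.mk₀ (x • 𝟙 M)).comp y (zero_add i) = x • y := by
      rw [Ext.mk₀_smul, Ext.smul_comp, Ext.mk₀_id_comp]
    exact hy ▸ hsmul y ▸ Submodule.smul_mem_smul hx trivial
  have hbot := Submodule.eq_bot_of_le_smul_of_le_jacobson_bot _ _
    (ModuleCat.finite_ext S M T i).fg_top hle (maximalIdeal_le_jacobson _)
  exact (Submodule.subsingleton_iff S).mp (subsingleton_of_bot_eq_top hbot.symm)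

theorem subsingleton_ext_of_isWeaklyRegular {M T : ModuleCat.{u} S} [Module.Finite S M]
    [Module.Finite S T] {rs : List S} (hrs : ∀ r ∈ rs, r ∈ maximalIdeal S)
    (hM : IsWeaklyRegular M rs) {i : ℕ}
    (h : ∀ N : ModuleCat.{u} S, Module.Finite S N → Subsingleton (Ext N T (i + rs.length))) :
    Subsingleton (Ext M T i) := by
  induction rs generalizing M i with
  | nil => exact h M ‹_›
  | cons r rs ih =>
    rw [List.forall_mem_cons] at hrs
    rw [isWeaklyRegular_cons_iff] at hM
    refine subsingleton_ext_of_quotSMulTop hrs.1 hM.1 (ih hrs.2 hM.2 fun N hN => ?_)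
    rw [add_assoc, add_comm 1]
    exact h N hN

theorem exists_injective_of_forall_not_isSMulRegular {M : Type u} [AddCommGroup M] [Module S M]
    [Module.Finite S M] (h : ∀ x ∈ maximalIdeal S, ¬ IsSMulRegular M x) :
    ∃ f : (S ⧸ maximalIdeal S) →ₗ[S] M, Function.Injective f := by
  have : IsSimpleModule S (S ⧸ maximalIdeal S) :=
    isSimpleModule_iff_isCoatom.mpr Ideal.IsMaximal.out
  have : Nontrivial ((S ⧸ maximalIdeal S) →ₗ[S] M) := by
    rw [← not_subsingleton_iff_nontrivial, IsSMulRegular.subsingleton_linearMap_iff,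
      Ideal.annihilator_quotient]
    exact fun ⟨x, hx, hreg⟩ => h x hx hreg
  obtain ⟨f, hf⟩ := exists_ne (0 : (S ⧸ maximalIdeal S) →ₗ[S] M)
  exact ⟨f, (LinearMap.injective_or_eq_zero f).resolve_right hf⟩

theorem subsingleton_ext_residue_of_supportDim_lt {T : ModuleCat.{u} S} {t : ℕ}
    (h : ∀ N : ModuleCat.{u} S, Module.Finite S N → Subsingleton (Ext N T (t + 1)))
    (M : ModuleCat.{u} S) [Module.Finite S M] [Nontrivial M] {d : ℕ} (hdt : d ≤ t)
    (hd : Module.supportDim S M < d) (hM : ∀ i, t < i + d → Subsingleton (Ext M T i)) :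
    Subsingleton (Ext (ModuleCat.of S (S ⧸ maximalIdeal S)) T t) := by
  have hdim (N : Type u) [AddCommGroup N] [Module S N] [Nontrivial N] :
      ∃ a : ℕ∞, Module.supportDim S N = a :=
    (WithBot.ne_bot_iff_exists.mp (Module.supportDim_ne_bot_of_nontrivial S N)).imp fun _ => Eq.symm
  -- Killing a regular element of `M` lowers `d`; once there is none left, the residue field embeds
  -- in `M`.
  induction d generalizing M with
  | zero =>
    obtain ⟨a, ha⟩ := hdim M
    rw [ha] at hd
    exact absurd hd (by exact_mod_cast not_lt_zero)
  | succ d ih =>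
    by_cases hx : ∃ x ∈ maximalIdeal S, IsSMulRegular M x
    · obtain ⟨x, hxm, hx⟩ := hx
      have : Nontrivial (QuotSMulTop x M) := nontrivial_quotSMulTop_of_mem_maximalIdeal M hxm
      refine ih (ModuleCat.of S (QuotSMulTop x M)) (by lia) ?_ fun i hi => ?_
      · obtain ⟨a, ha⟩ := hdim (QuotSMulTop x M)
        rw [← Module.supportDim_quotSMulTop_succ_eq_supportDim hx hxm, ha] at hd
        change Module.supportDim S (QuotSMulTop x M) < d
        rw [ha]
        norm_cast at hd ⊢
        exact lt_of_add_lt_add_right (by exact_mod_cast hd)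
      · obtain ⟨k, rfl⟩ : ∃ k, i = k + 1 := Nat.exists_eq_add_one.mpr (by lia)
        exact subsingleton_ext_X₃ hx.smulShortComplex_shortExact (hM _ (by lia)) (hM _ (by lia))
    · push Not at hx
      obtain ⟨f, hf⟩ := exists_injective_of_forall_not_isSMulRegular hx
      exact subsingleton_ext_X₁ (IsSES.of_injective hf).shortExact (hM t (by lia))
        (h _ inferInstance)

theorem subsingleton_ext_residue {T : ModuleCat.{u} S} {t : ℕ} (ht : ringKrullDim S < t)
    (h : ∀ N : ModuleCat.{u} S, Module.Finite S N → Subsingleton (Ext N T (t + 1))) :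
    Subsingleton (Ext (ModuleCat.of S (S ⧸ maximalIdeal S)) T t) := by
  refine subsingleton_ext_residue_of_supportDim_lt h (ModuleCat.of S S) le_rfl ?_ fun i hi => ?_
  · exact (Module.supportDim_self_eq_ringKrullDim S).trans_lt ht
  · obtain ⟨k, rfl⟩ : ∃ k, i = k + 1 := Nat.exists_eq_add_one.mpr (by lia)
    exact subsingleton_ext_of_projective _ T k

theorem subsingleton_ext_quotient_prime {T : ModuleCat.{u} S} [Module.Finite S T] {t : ℕ}
    (ht : ringKrullDim S < t)
    (h : ∀ N : ModuleCat.{u} S, Module.Finite S N → Subsingleton (Ext N T (t + 1)))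
    (p : PrimeSpectrum S) :
    Subsingleton (Ext (ModuleCat.of S (S ⧸ p.asIdeal)) T t) := by
  obtain hp | hp := (le_maximalIdeal p.2.ne_top).eq_or_lt
  · rw [hp]
    exact subsingleton_ext_residue ht h
  · obtain ⟨x, hxm, hxp⟩ := SetLike.exists_of_lt hp
    refine subsingleton_ext_of_quotSMulTop hxm ?_ (h _ inferInstance)
    exact (isSMulRegular_quotient_iff_mem_of_smul_mem _ _).mpr fun y hy =>
      (p.2.mem_or_mem hy).resolve_left hxp

theorem subsingleton_ext_of_subsingleton_ext_succ {T : ModuleCat.{u} S} [Module.Finite S T]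
    {t : ℕ} (ht : ringKrullDim S < t)
    (h : ∀ N : ModuleCat.{u} S, Module.Finite S N → Subsingleton (Ext N T (t + 1)))
    (N : ModuleCat.{u} S) [hN : Module.Finite S N] : Subsingleton (Ext N T t) := by
  refine IsNoetherianRing.induction_on_isQuotientEquivQuotientPrime S hN
    (motive := fun N _ _ _ => Subsingleton (Ext (ModuleCat.of S N) T t)) ?_ ?_ ?_
  · intro N _ _ _ _
    have := (ModuleCat.isZero_of_subsingleton (ModuleCat.of S N)).hasProjectiveDimensionLT_zero
    exact HasProjectiveDimensionLT.subsingleton _ 0 t t.zero_le T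
  · intro N _ _ _ p e
    exact subsingleton_ext_of_retract_left (Retract.ofIso e.toModuleIso)
      (subsingleton_ext_quotient_prime ht h p)
  · intro N₁ _ _ _ N₂ _ _ _ N₃ _ _ _ f g hf hg hfg h₁ h₃
    exact subsingleton_ext_X₂ (IsSES.of_exact hf hg hfg).shortExact h₁ h₃

theorem subsingleton_ext_of_hasInjectiveDimensionLT {T : ModuleCat.{u} S} [Module.Finite S T]
    {n t : ℕ} [HasInjectiveDimensionLT T n] (ht : ringKrullDim S < t) (N : ModuleCat.{u} S)
    [Module.Finite S N] : Subsingleton (Ext N T t) := by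
  obtain hn | hn := le_total n t
  · exact HasInjectiveDimensionLT.subsingleton T n t hn N
  refine Nat.decreasingInduction' (m := t) (n := n)
    (P := fun t => ∀ N : ModuleCat.{u} S, Module.Finite S N → Subsingleton (Ext N T t))
    (fun k _ hk ih N _ => subsingleton_ext_of_subsingleton_ext_succ
      (ht.trans_le (by exact_mod_cast hk)) ih N) hn
    (fun N _ => HasInjectiveDimensionLT.subsingleton T n n le_rfl N) N ‹_›

end InjectiveDimension

section Localization

open Abelian

variable {R}

namespace IsSES

variable {A B C : Type u} [AddCommGroup A] [Module R A] [AddCommGroup B] [Module R B]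
  [AddCommGroup C] [Module R C] {f : A →ₗ[R] B} {g : B →ₗ[R] C}

theorem localizedModule (h : IsSES f g) (S : Submonoid R) :
    IsSES (LocalizedModule.map S f) (LocalizedModule.map S g) :=
  of_exact (LocalizedModule.map_injective S f h.1) (LocalizedModule.map_surjective S g h.2.1)
    (LocalizedModule.map_exact S f g h.exact)

theorem exists_smul_extension [Module.Finite R A] [Module.FinitePresentation R B]
    {N : ModuleCat.{u} R} (h : IsSES f g) (S : Submonoid R)
    (hN : Subsingleton (Ext (ModuleCat.of (Localization S) (LocalizedModule S C))
      (ModuleCat.of (Localization S) (LocalizedModule S N)) 1)) (φ : A →ₗ[R] N) :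
    ∃ s : S, ∃ ψ : B →ₗ[R] N, ψ ∘ₗ f = s • φ := by
  obtain ⟨ψ', hψ'⟩ := (h.localizedModule S).exists_extension hN (LocalizedModule.map S φ)
  obtain ⟨⟨ψ, s⟩, hψ⟩ := IsLocalizedModule.surj S (LocalizedModule.map S (M := B) (N := N)) ψ'
  have hloc : LocalizedModule.mkLinearMap S N ∘ₗ (ψ ∘ₗ f) =
      LocalizedModule.mkLinearMap S N ∘ₗ (s • φ) := by
    ext a
    have hf : ψ' (LocalizedModule.mkLinearMap S B (f a)) =
        LocalizedModule.mkLinearMap S N (φ a) := by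
      simpa using LinearMap.congr_fun hψ' (LocalizedModule.mkLinearMap S A a)
    have hs : s • ψ' (LocalizedModule.mkLinearMap S B (f a)) =
        LocalizedModule.mkLinearMap S N (ψ (f a)) := by
      simpa using LinearMap.congr_fun hψ (LocalizedModule.mkLinearMap S B (f a))
    rw [LinearMap.comp_apply, LinearMap.comp_apply, LinearMap.comp_apply, ← hs, hf,
      LinearMap.smul_apply, Submonoid.smul_def, Submonoid.smul_def, map_smul]
  obtain ⟨t, ht⟩ := Module.Finite.exists_smul_of_comp_eq_of_isLocalizedModule S _ _ _ hloc
  exact ⟨t * s, t • ψ, by rw [mul_smul, ← ht, LinearMap.smul_comp]⟩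

end IsSES

theorem mem_of_forall_exists_notMem_smul_mem {M : Type*} [AddCommGroup M] [Module R M]
    {p : Submodule R M} {x : M} (h : ∀ m : Ideal R, m.IsMaximal → ∃ s ∉ m, s • x ∈ p) : x ∈ p := by
  suffices p.comap (LinearMap.toSpanSingleton R M x) = ⊤ by
    simpa using (Ideal.eq_top_iff_one _).mp this
  refine Not.imp_symm (Ideal.exists_le_maximal _) fun ⟨m, hm, hle⟩ => ?_
  obtain ⟨s, hs, hsx⟩ := h m hm
  exact hs (hle hsx)

theorem subsingleton_ext_of_localization [IsNoetherianRing R] {M N : ModuleCat.{u} R}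
    [Module.Finite R M] {i : ℕ}
    (h : ∀ p : PrimeSpectrum R, Subsingleton (Ext (localizeM R p M) (localizeM R p N) (i + 1))) :
    Subsingleton (Ext M N (i + 1)) := by
  induction i generalizing M with
  | zero =>
    obtain ⟨n, g, hg⟩ := Module.Finite.exists_fin' R M
    have hM := IsSES.of_surjective hg
    refine hM.subsingleton_ext_one fun φ => mem_of_forall_exists_notMem_smul_mem
      (p := LinearMap.range (LinearMap.lcomp R N (LinearMap.ker g).subtype)) fun m hm => ?_
    obtain ⟨s, ψ, hψ⟩ := hM.exists_smul_extension m.primeCompl (h ⟨m, hm.isPrime⟩) φ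
    exact ⟨s, s.2, ψ, hψ⟩
  | succ i ih =>
    obtain ⟨n, g, hg⟩ := Module.Finite.exists_fin' R M
    have hM := IsSES.of_surjective hg
    refine subsingleton_ext_X₃ hM.shortExact
      (ih (M := ModuleCat.of R (LinearMap.ker g)) fun p => ?_)
      (subsingleton_ext_of_projective (ModuleCat.of R (Fin n → R)) N _)
    exact subsingleton_ext_X₁ (hM.localizedModule p.asIdeal.primeCompl).shortExact
      (subsingleton_ext_of_projective (localizeM R p (ModuleCat.of R (Fin n → R))) _ i) (h p)

end Localization

section MaximalCohenMacaulay

open Abelian IsLocalRing RingTheory.Sequence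

/-- `R` is a Gorenstein ring: every local ring of `R` has finite injective dimension over itself. -/
def IsGorenstein : Prop :=
  ∀ p : PrimeSpectrum R, ∃ n : ℕ, idLE (Localization.AtPrime p.asIdeal) n
    (ModuleCat.of (Localization.AtPrime p.asIdeal) (Localization.AtPrime p.asIdeal))

variable {R}

theorem ringKrullDim_localization_eq_heightE (p : PrimeSpectrum R) :
    ringKrullDim (Localization.AtPrime p.asIdeal) = heightE R p := by
  rw [IsLocalization.AtPrime.ringKrullDim_eq_height p.asIdeal, PrimeSpectrum.height_eq_orderHeight,
    heightE]

theorem exists_isWeaklyRegular_of_le_depthE {I : Ideal R} {M : Type u} [AddCommGroup M]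
    [Module R M] {d : ℕ} (h : d ≤ depthE R I M) :
    ∃ rs : List R, (∀ r ∈ rs, r ∈ I) ∧ IsWeaklyRegular M rs ∧ d ≤ rs.length := by
  cases d with
  | zero => exact ⟨[], List.forall_mem_nil _, IsWeaklyRegular.nil R M, le_rfl⟩
  | succ d =>
    have hd : (d : ℕ∞) < depthE R I M := lt_of_lt_of_le (by exact_mod_cast d.lt_succ_self) h
    obtain ⟨_, ⟨rs, hI, hrs, rfl⟩, hlt⟩ := lt_sSup_iff.mp hd
    exact ⟨rs, hI, hrs, by exact_mod_cast hlt⟩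

theorem depthE_eq_zero {I : Ideal R} {M : Type u} [AddCommGroup M] [Module R M] {z : M}
    (hz : z ≠ 0) (hI : ∀ r ∈ I, r • z = 0) : depthE R I M = 0 := by
  refine nonpos_iff_eq_zero.mp (sSup_le ?_)
  rintro _ ⟨rs, hrs, hM, rfl⟩
  cases rs with
  | nil => rfl
  | cons r rs =>
    exact absurd (hI r (hrs r List.mem_cons_self)) fun h =>
      hz (((isWeaklyRegular_cons_iff M r rs).mp hM).1.right_eq_zero_of_smul h)

theorem localDepth_eq_zero {M : ModuleCat.{u} R} {z : M} {p : PrimeSpectrum R}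
    (hz : ∀ r : R, r ∈ p.asIdeal ↔ r • z = 0) : localDepth R p M = 0 := by
  let z' := LocalizedModule.mkLinearMap p.asIdeal.primeCompl M z
  refine depthE_eq_zero (z := z') (fun h => ?_) fun r hr => ?_
  · obtain ⟨s, hs⟩ := (IsLocalizedModule.eq_zero_iff p.asIdeal.primeCompl _).mp h
    exact s.2 ((hz s).mpr hs)
  · have hle : maximalIdeal (Localization.AtPrime p.asIdeal) ≤
        LinearMap.ker (LinearMap.toSpanSingleton (Localization.AtPrime p.asIdeal) _ z') := by
      rw [← Localization.AtPrime.map_eq_maximalIdeal, Ideal.map_le_iff_le_comap]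
      intro a ha
      rw [Ideal.mem_comap, LinearMap.mem_ker, LinearMap.toSpanSingleton_apply, algebraMap_smul,
        ← map_smul, (hz a).mp ha, map_zero]
    exact hle hr

theorem subsingleton_ext_of_pdLE {M : ModuleCat.{u} R} [IsNoetherianRing R]
    (hM : ∀ i, Subsingleton (Ext M (ModuleCat.of R R) (i + 1))) {n : ℕ} {N : ModuleCat.{u} R}
    [Module.Finite R N] (hN : pdLE R n N) (i : ℕ) : Subsingleton (Ext M N (i + 1)) := by
  induction n generalizing N i with
  | zero =>
    have : Module.Projective R N := hN
    exact subsingleton_ext_of_fg_projective (hM i)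
  | succ n ih =>
    obtain ⟨K, P, f, g, hP, hP', hfg, hK⟩ := hN
    have : Module.Finite R K := Module.Finite.of_injective f hfg.1
    exact subsingleton_ext_to_X₃ hfg.shortExact (subsingleton_ext_of_fg_projective (hM i))
      (ih hK (i + 1))

theorem subsingleton_ext_of_mem_PDcat {M N : ModuleCat.{u} R} [IsNoetherianRing R]
    (hM : ∀ i, Subsingleton (Ext M (ModuleCat.of R R) (i + 1))) (hN : N ∈ PDcat R) (i : ℕ) :
    Subsingleton (Ext M N (i + 1)) := by
  obtain ⟨hN, n, hn⟩ := hN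
  exact subsingleton_ext_of_pdLE hM hn i

theorem exists_injective_forall_exists_comp_eq {M : Type u} [AddCommGroup M] [Module R M]
    [Module.Finite R (Module.Dual R M)] (h : Function.Injective (Module.Dual.eval R M)) :
    ∃ (n : ℕ) (v : M →ₗ[R] (Fin n → R)), Function.Injective v ∧
      ∀ φ : M →ₗ[R] R, ∃ ψ : (Fin n → R) →ₗ[R] R, ψ ∘ₗ v = φ := by
  obtain ⟨n, g, hg⟩ := Module.Finite.exists_fin' R (Module.Dual R M)
  let v : M →ₗ[R] (Fin n → R) := LinearMap.pi fun i => g (Pi.single i 1)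
  have hv (φ : M →ₗ[R] R) : ∃ ψ : (Fin n → R) →ₗ[R] R, ψ ∘ₗ v = φ := by
    obtain ⟨c, rfl⟩ := hg φ
    refine ⟨∑ i, c i • LinearMap.proj i, ?_⟩
    ext z
    conv_rhs => rw [pi_eq_sum_univ' c]
    simp [v, LinearMap.sum_apply, map_sum]
  refine ⟨n, v, (injective_iff_map_eq_zero v).mpr fun z hz => h ?_, hv⟩
  ext φ
  obtain ⟨ψ, rfl⟩ := hv φ
  simp [hz]

namespace IsGorenstein

variable [IsNoetherianRing R]

theorem subsingleton_ext_localization (hG : IsGorenstein R) {p : PrimeSpectrum R}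
    (N : ModuleCat.{u} (Localization.AtPrime p.asIdeal))
    [Module.Finite (Localization.AtPrime p.asIdeal) N] {i : ℕ} (hi : heightE R p < i) :
    Subsingleton (Ext N (ModuleCat.of (Localization.AtPrime p.asIdeal)
      (Localization.AtPrime p.asIdeal)) i) := by
  obtain ⟨n, hn⟩ := hG p
  have : IsNoetherianRing (Localization.AtPrime p.asIdeal) :=
    IsLocalization.isNoetherianRing p.asIdeal.primeCompl _ inferInstance
  have := hasInjectiveDimensionLE_of_idLE hn
  refine subsingleton_ext_of_hasInjectiveDimensionLT (n := n + 1) ?_ N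
  rw [ringKrullDim_localization_eq_heightE]
  exact_mod_cast hi

theorem subsingleton_ext_of_mem_MCMcat (hG : IsGorenstein R) {Z : ModuleCat.{u} R}
    (hZ : Z ∈ MCMcat R) (i : ℕ) : Subsingleton (Ext Z (ModuleCat.of R R) (i + 1)) := by
  have := hZ.1
  refine subsingleton_ext_of_localization fun p => ?_
  have : IsNoetherianRing (Localization.AtPrime p.asIdeal) :=
    IsLocalization.isNoetherianRing p.asIdeal.primeCompl _ inferInstance
  obtain ⟨d, hd⟩ : ∃ d : ℕ, d = heightE R p := by
    rw [heightE, ← PrimeSpectrum.height_eq_orderHeight]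
    exact ENat.ne_top_iff_exists.mp Ideal.height_ne_top_of_isPrime
  obtain ⟨rs, hrs, hreg, hlen⟩ := exists_isWeaklyRegular_of_le_depthE (hd ▸ hZ.2 p)
  refine subsingleton_ext_of_fg_projective (subsingleton_ext_of_isWeaklyRegular hrs hreg
    fun N _ => hG.subsingleton_ext_localization N ?_)
  rw [← hd]
  exact_mod_cast (by lia)

theorem exists_dual_apply_ne_zero (hG : IsGorenstein R) {M : ModuleCat.{u} R} [Module.Finite R M]
    {p : PrimeSpectrum R} (hp : heightE R p = 0) {w : M}
    (hw : ∀ r : R, r ∈ p.asIdeal ↔ r • w = 0) : ∃ φ : M →ₗ[R] R, φ w ≠ 0 := by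
  have hass : p.asIdeal ∈ associatedPrimes R R := by
    refine Module.associatedPrimes.minimalPrimes_annihilator_subset_associatedPrimes R R ?_
    rw [Module.annihilator_eq_bot.mpr inferInstance]
    exact Ideal.height_eq_zero_iff.mp ((PrimeSpectrum.height_eq_orderHeight p).trans hp)
  obtain ⟨-, a, ha⟩ := isAssociatedPrime_iff.mp hass
  have ha (r : R) : r ∈ p.asIdeal ↔ r • a = 0 := by
    rw [ha, Submodule.mem_colon_singleton, Submodule.mem_bot]
  let w' : (R ⧸ p.asIdeal) →ₗ[R] M :=
    p.asIdeal.liftQ (LinearMap.toSpanSingleton R M w) fun r hr => (hw r).mp hr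
  let a' : (R ⧸ p.asIdeal) →ₗ[R] R :=
    p.asIdeal.liftQ (LinearMap.toSpanSingleton R R a) fun r hr => (ha r).mp hr
  have : Module.FinitePresentation R M := Module.finitePresentation_of_finite R M
  have hinj : Function.Injective w' :=
    LinearMap.ker_eq_bot.mp (Submodule.ker_liftQ_eq_bot _ _ _ fun r hr => (hw r).mpr hr)
  obtain ⟨s, ψ, hψ⟩ := (IsSES.of_injective hinj).exists_smul_extension p.asIdeal.primeCompl
    (N := ModuleCat.of R R) (subsingleton_ext_of_fg_projective
      (hG.subsingleton_ext_localization _ (by rw [hp]; exact_mod_cast one_pos))) a'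
  have h1 : ψ ((1 : R) • w) = (s : R) • (1 : R) • a :=
    LinearMap.congr_fun hψ (Submodule.Quotient.mk 1)
  rw [one_smul, one_smul] at h1
  exact ⟨ψ, fun h0 => s.2 ((ha s).mpr (h1.symm.trans h0))⟩

theorem injective_dual_eval_of_mem_MCMcat (hG : IsGorenstein R) {Z : ModuleCat.{u} R}
    (hZ : Z ∈ MCMcat R) : Function.Injective (Module.Dual.eval R Z) := by
  have := hZ.1
  rw [← LinearMap.ker_eq_bot]
  by_contra hne
  have : Nontrivial (LinearMap.ker (Module.Dual.eval R Z)) :=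
    Submodule.nontrivial_iff_ne_bot.mpr hne
  obtain ⟨p, hp⟩ := associatedPrimes.nonempty R (LinearMap.ker (Module.Dual.eval R Z))
  obtain ⟨hp, ⟨w, hwker⟩, hw⟩ := isAssociatedPrime_iff.mp hp
  have hw (r : R) : r ∈ p ↔ r • w = 0 := by
    rw [hw, Submodule.mem_colon_singleton, Submodule.mem_bot, ← Subtype.coe_inj]
    rfl
  have hp0 : heightE R ⟨p, hp⟩ = 0 := nonpos_iff_eq_zero.mp
    ((hZ.2 ⟨p, hp⟩).trans (localDepth_eq_zero hw).le)
  obtain ⟨φ, hφ⟩ := hG.exists_dual_apply_ne_zero hp0 hw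
  exact hφ (LinearMap.congr_fun (LinearMap.mem_ker.mp hwker) φ)

theorem exists_isSES_of_mem_MCMcat (hG : IsGorenstein R) {Z : ModuleCat.{u} R}
    (hZ : Z ∈ MCMcat R) : ∃ (F C : ModuleCat.{u} R) (f : Z →ₗ[R] F) (g : F →ₗ[R] C),
      IsSES f g ∧ Module.Finite R F ∧ Module.Projective R F ∧
        ∀ i, Subsingleton (Ext C (ModuleCat.of R R) (i + 1)) := by
  have := hZ.1
  have : Module.Finite R (Module.Dual R Z) := Module.IsNoetherian.finite R (Z →ₗ[R] R)
  obtain ⟨n, v, hv, hext⟩ :=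
    exists_injective_forall_exists_comp_eq (hG.injective_dual_eval_of_mem_MCMcat hZ)
  have hC := IsSES.of_injective hv
  refine ⟨ModuleCat.of R (Fin n → R), ModuleCat.of R _, v, _, hC, inferInstance, inferInstance,
    fun i => ?_⟩
  cases i with
  | zero => exact hC.subsingleton_ext_one hext
  | succ i =>
    exact subsingleton_ext_X₃ hC.shortExact (hG.subsingleton_ext_of_mem_MCMcat hZ i)
      (subsingleton_ext_of_projective _ _ _)

end IsGorenstein

end MaximalCohenMacaulay

section Diagrams

variable {R} {A B C D : Type u} [AddCommGroup A] [Module R A] [AddCommGroup B] [Module R B]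
  [AddCommGroup C] [Module R C] [AddCommGroup D] [Module R D]

/-- The fibre product of two linear maps with common codomain, as a submodule of the product. -/
abbrev fiberProduct (g : B →ₗ[R] C) (k : D →ₗ[R] C) : Submodule R (B × D) :=
  LinearMap.eqLocus (g ∘ₗ LinearMap.fst R B D) (k ∘ₗ LinearMap.snd R B D)

/-- The amalgamated sum of two linear maps with common domain, as a quotient of the product. -/
abbrev amalgamatedSum (f : A →ₗ[R] B) (k : A →ₗ[R] D) : Type u :=
  (B × D) ⧸ LinearMap.range (f.prod (-k))

namespace IsSES

variable {A' B' C' : Type u} [AddCommGroup A'] [Module R A'] [AddCommGroup B'] [Module R B']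
  [AddCommGroup C'] [Module R C'] {f : A →ₗ[R] B} {g : B →ₗ[R] C}

theorem comp_linearEquiv (h : IsSES f g) (e : B ≃ₗ[R] D) :
    IsSES (e.toLinearMap ∘ₗ f) (g ∘ₗ e.symm.toLinearMap) :=
  of_exact (e.injective.comp h.1) (h.2.1.comp e.symm.surjective)
    ((LinearEquiv.conj_exact_iff_exact f g e).mpr h.exact)

theorem fiberProduct_snd (h : IsSES f g) (k : D →ₗ[R] C) : ∃ i : A →ₗ[R] fiberProduct g k,
    IsSES i (LinearMap.snd R B D ∘ₗ (fiberProduct g k).subtype) := by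
  refine ⟨(LinearMap.inl R B D ∘ₗ f).codRestrict _ fun a =>
    (h.exact.apply_apply_eq_zero a).trans (map_zero k).symm, of_exact ?_ ?_ ?_⟩
  · exact fun a a' haa' => h.1 (congrArg (fun w => w.1.1) haa')
  · intro d
    obtain ⟨b, hb⟩ := h.2.1 (k d)
    exact ⟨⟨(b, d), hb⟩, rfl⟩
  · rintro ⟨⟨b, d⟩, hbd : g b = k d⟩
    refine ⟨fun hd : d = 0 => ?_, fun ⟨a, ha⟩ => (congrArg (fun w => w.1.2) ha).symm⟩
    obtain ⟨a, rfl⟩ := (h.exact b).mp (by rw [hbd, hd, map_zero])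
    exact ⟨a, Subtype.ext (Prod.ext rfl hd.symm)⟩

theorem amalgamatedSum_inr (h : IsSES f g) (k : A →ₗ[R] D) : ∃ p : amalgamatedSum f k →ₗ[R] C,
    IsSES ((LinearMap.range (f.prod (-k))).mkQ ∘ₗ LinearMap.inr R B D) p := by
  refine ⟨(LinearMap.range (f.prod (-k))).liftQ (g ∘ₗ LinearMap.fst R B D) ?_, of_exact ?_ ?_ ?_⟩
  · rintro _ ⟨a, rfl⟩
    exact h.exact.apply_apply_eq_zero a
  · refine (injective_iff_map_eq_zero _).mpr fun d hd => ?_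
    obtain ⟨a, ha⟩ := (Submodule.Quotient.mk_eq_zero _).mp hd
    have ha0 : a = 0 := h.1 ((congrArg Prod.fst ha).trans (map_zero f).symm)
    rw [ha0, map_zero] at ha
    exact (congrArg Prod.snd ha).symm
  · intro c
    obtain ⟨b, rfl⟩ := h.2.1 c
    exact ⟨Submodule.Quotient.mk (b, 0), rfl⟩
  · intro w
    obtain ⟨⟨b, d⟩, rfl⟩ := Submodule.Quotient.mk_surjective _ w
    refine ⟨fun hb : g b = 0 => ?_, ?_⟩
    · obtain ⟨a, rfl⟩ := (h.exact b).mp hb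
      exact ⟨d + k a, (Submodule.Quotient.eq _).mpr ⟨-a, by simp⟩⟩
    · rintro ⟨d', hd'⟩
      rw [← hd']
      exact map_zero g

theorem exists_fiberProduct {f' : A' →ₗ[R] B'} {g' : B' →ₗ[R] C} (h : IsSES f g)
    (h' : IsSES f' g') : ∃ (W : ModuleCat.{u} R) (i : A →ₗ[R] W) (p : W →ₗ[R] B')
      (i' : A' →ₗ[R] W) (p' : W →ₗ[R] B), IsSES i p ∧ IsSES i' p' := by
  obtain ⟨i, hi⟩ := h.fiberProduct_snd g'
  obtain ⟨i', hi'⟩ := h'.fiberProduct_snd g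
  have e : fiberProduct g' g ≃ₗ[R] fiberProduct g g' :=
    (LinearEquiv.prodComm R B' B).ofSubmodules _ _ (by
      ext ⟨b, b'⟩
      simp [Submodule.mem_map_equiv, eq_comm])
  exact ⟨ModuleCat.of R _, i, _, _, _, hi, hi'.comp_linearEquiv e⟩

theorem exists_amalgamatedSum {f' : A →ₗ[R] B'} {g' : B' →ₗ[R] C'} (h : IsSES f g)
    (h' : IsSES f' g') : ∃ (W : ModuleCat.{u} R) (i : B' →ₗ[R] W) (p : W →ₗ[R] C)
      (i' : B →ₗ[R] W) (p' : W →ₗ[R] C'), IsSES i p ∧ IsSES i' p' := by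
  obtain ⟨p, hp⟩ := h.amalgamatedSum_inr f'
  obtain ⟨p', hp'⟩ := h'.amalgamatedSum_inr f
  have e : amalgamatedSum f' f ≃ₗ[R] amalgamatedSum f f' :=
    Submodule.Quotient.equiv _ _ (LinearEquiv.prodComm R B' B) (by
      ext ⟨b, b'⟩
      simp only [Submodule.mem_map_equiv, LinearMap.mem_range]
      exact ⟨fun ⟨a, ha⟩ => ⟨-a, by simp_all [Prod.ext_iff]⟩,
        fun ⟨a, ha⟩ => ⟨-a, by simp_all [Prod.ext_iff]⟩⟩)
  exact ⟨ModuleCat.of R _, _, p, _, _, hp, hp'.comp_linearEquiv e⟩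

theorem exists_ker_comp {f' : A' →ₗ[R] C} {g' : C →ₗ[R] C'} (h : IsSES f g) (h' : IsSES f' g') :
    ∃ (K : ModuleCat.{u} R) (i : A →ₗ[R] K) (p : K →ₗ[R] A') (j : K →ₗ[R] B),
      IsSES i p ∧ IsSES j (g' ∘ₗ g) := by
  obtain ⟨i, hi⟩ := h.fiberProduct_snd f'
  refine ⟨ModuleCat.of R _, i, _, LinearMap.fst R B A' ∘ₗ Submodule.subtype _, hi,
    of_exact ?_ (h'.2.1.comp h.2.1) fun b => ?_⟩
  · rintro ⟨⟨b, a⟩, hba : g b = f' a⟩ ⟨⟨_, a'⟩, hba' : g _ = f' a'⟩ rfl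
    exact Subtype.ext (Prod.ext rfl (h'.1 (hba.symm.trans hba')))
  · rw [LinearMap.comp_apply, h'.exact]
    exact ⟨fun ⟨a, ha⟩ => ⟨⟨(b, a), ha.symm⟩, rfl⟩, fun ⟨⟨(_, a), ha⟩, hb⟩ => hb ▸ ⟨a, ha.symm⟩⟩

theorem exists_comp_coker {f' : B →ₗ[R] B'} {g' : B' →ₗ[R] C'} (h : IsSES f g)
    (h' : IsSES f' g') : ∃ (Q : ModuleCat.{u} R) (i : C →ₗ[R] Q) (p : Q →ₗ[R] C')
      (q : B' →ₗ[R] Q), IsSES i p ∧ IsSES (f' ∘ₗ f) q := by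
  obtain ⟨p, hp⟩ := h'.amalgamatedSum_inr g
  refine ⟨ModuleCat.of R _, _, p, Submodule.mkQ _ ∘ₗ LinearMap.inl R B' C, hp,
    of_exact (h'.1.comp h.1) (fun w => ?_) fun b' => ?_⟩
  · obtain ⟨⟨b', c⟩, rfl⟩ := Submodule.Quotient.mk_surjective _ w
    obtain ⟨b, rfl⟩ := h.2.1 c
    exact ⟨b' + f' b, (Submodule.Quotient.eq _).mpr ⟨b, by simp⟩⟩
  · refine (Submodule.Quotient.mk_eq_zero _).trans ⟨?_, ?_⟩
    · rintro ⟨b, hb⟩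
      obtain ⟨a, rfl⟩ := (h.exact b).mp (neg_eq_zero.mp (congrArg Prod.snd hb))
      exact ⟨a, congrArg Prod.fst hb⟩
    · rintro ⟨a, rfl⟩
      exact ⟨f a, Prod.ext rfl (by simp [h.exact.apply_apply_eq_zero])⟩

end IsSES

end Diagrams

section Extensions

open Abelian

variable {R}

/-- The modules that are extensions of a member of `𝒴` by a member of `𝒳`: the middle terms of
short exact sequences `0 → X → E → Y → 0` with `X ∈ 𝒳` and `Y ∈ 𝒴`. -/
def extensionProduct (𝒳 𝒴 : Set (ModuleCat.{u} R)) : Set (ModuleCat.{u} R) :=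
  {E | ∃ X ∈ 𝒳, ∃ Y ∈ 𝒴, ∃ (f : X →ₗ[R] E) (g : E →ₗ[R] Y), IsSES f g}

local notation:70 𝒳:70 " ⋆ " 𝒴:71 => extensionProduct 𝒳 𝒴

/-- The modules that are direct summands of a member of `𝒳`. -/
def summandClosure (𝒳 : Set (ModuleCat.{u} R)) : Set (ModuleCat.{u} R) :=
  {M | ∃ N : ModuleCat.{u} R, ModuleCat.of R (M × N) ∈ 𝒳}

variable {𝒳 𝒳' 𝒴 𝒴' 𝒵 : Set (ModuleCat.{u} R)} {M N : ModuleCat.{u} R}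

theorem extensionProduct_mono (hX : 𝒳 ⊆ 𝒳') (hY : 𝒴 ⊆ 𝒴') : 𝒳 ⋆ 𝒴 ⊆ 𝒳' ⋆ 𝒴' :=
  fun _ ⟨X, hXX, Y, hYY, h⟩ => ⟨X, hX hXX, Y, hY hYY, h⟩

theorem extensionProduct_assoc : 𝒳 ⋆ 𝒴 ⋆ 𝒵 = 𝒳 ⋆ (𝒴 ⋆ 𝒵) := by
  refine Set.Subset.antisymm ?_ ?_
  · rintro M ⟨E, ⟨X, hX, Y, hY, f, g, hfg⟩, Z, hZ, f', g', hfg'⟩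
    obtain ⟨Q, i, p, q, hQ, hM⟩ := hfg.exists_comp_coker hfg'
    exact ⟨X, hX, Q, ⟨Y, hY, Z, hZ, i, p, hQ⟩, _, q, hM⟩
  · rintro M ⟨X, hX, Q, ⟨Y, hY, Z, hZ, f', g', hfg'⟩, f, g, hfg⟩
    obtain ⟨K, i, p, j, hK, hM⟩ := hfg.exists_ker_comp hfg'
    exact ⟨K, ⟨X, hX, Y, hY, i, p, hK⟩, Z, hZ, j, _, hM⟩

theorem mem_extensionProduct_of_linearEquiv (e : M ≃ₗ[R] N) (hM : M ∈ 𝒳 ⋆ 𝒴) : N ∈ 𝒳 ⋆ 𝒴 := by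
  obtain ⟨X, hX, Y, hY, f, g, hfg⟩ := hM
  exact ⟨X, hX, Y, hY, _, _, hfg.comp_linearEquiv e⟩

theorem extensionProduct_subset_swap (hXY : ∀ X ∈ 𝒳, ∀ Y ∈ 𝒴, Subsingleton (Ext X Y 1)) :
    𝒴 ⋆ 𝒳 ⊆ 𝒳 ⋆ 𝒴 := by
  rintro M ⟨Y, hY, X, hX, f, g, hfg⟩
  obtain ⟨s, hs⟩ := hfg.exists_lift (hXY X hX Y hY) LinearMap.id
  obtain ⟨r, hr⟩ := hfg.exists_of_comp_eq_id hs
  exact ⟨X, hX, Y, hY, s, r, hr⟩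

namespace IsResolving

theorem extensionProduct_self_subset (h𝒳 : IsResolving R 𝒳) : 𝒳 ⋆ 𝒳 ⊆ 𝒳 :=
  fun _ ⟨_, hX, _, hY, f, g, hfg⟩ => h𝒳.ext_closed _ _ _ f g hfg hX hY

theorem subset_extensionProduct_left (h𝒴 : IsResolving R 𝒴) : 𝒳 ⊆ 𝒳 ⋆ 𝒴 := fun X hX =>
  ⟨X, hX, ModuleCat.of R PUnit, h𝒴.proj_mem _ inferInstance inferInstance, LinearMap.id, 0,
    IsSES.of_exact Function.injective_id (Function.surjective_to_subsingleton _)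
      ((LinearMap.exact_zero_iff_surjective _ _).mpr Function.surjective_id)⟩

theorem subset_extensionProduct_right (h𝒳 : IsResolving R 𝒳) : 𝒴 ⊆ 𝒳 ⋆ 𝒴 := fun Y hY =>
  ⟨ModuleCat.of R PUnit, h𝒳.proj_mem _ inferInstance inferInstance, Y, hY, 0, LinearMap.id,
    IsSES.of_exact (Function.injective_of_subsingleton _) Function.surjective_id
      ((LinearMap.exact_zero_iff_injective _ _).mpr Function.injective_id)⟩

theorem mem_of_comp_eq_id (h𝒳 : IsResolving R 𝒳) {s : M →ₗ[R] N} {r : N →ₗ[R] M}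
    (hrs : r ∘ₗ s = LinearMap.id) (hN : N ∈ 𝒳) : M ∈ 𝒳 := by
  have hr : IsSES (LinearMap.ker r).subtype r :=
    IsSES.of_surjective (Function.RightInverse.surjective (DFunLike.congr_fun hrs))
  obtain ⟨e, -⟩ := hr.exact.splitSurjectiveEquiv hr.1 ⟨s, hrs⟩
  exact h𝒳.summand_closed M (ModuleCat.of R (LinearMap.ker r))
    (h𝒳.iso_closed N _ ⟨e.trans (LinearEquiv.prodComm R _ _)⟩ hN)

theorem exists_syzygy [IsNoetherianRing R] (h𝒳 : IsResolving R 𝒳) (hM : M ∈ 𝒳) :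
    ∃ K ∈ 𝒳, ∃ (F : ModuleCat.{u} R) (f : K →ₗ[R] F) (g : F →ₗ[R] M),
      IsSES f g ∧ Module.Finite R F ∧ Module.Projective R F := by
  have := h𝒳.fg M hM
  obtain ⟨n, g, hg⟩ := Module.Finite.exists_fin' R M
  exact ⟨ModuleCat.of R (LinearMap.ker g), h𝒳.syzygy_closed _ (ModuleCat.of R (Fin n → R)) M _ g
    (IsSES.of_surjective hg) inferInstance inferInstance inferInstance hM,
    ModuleCat.of R (Fin n → R), _, g, IsSES.of_surjective hg, inferInstance, inferInstance⟩

theorem extensionProduct_extensionProduct_subset (h𝒴 : IsResolving R 𝒴) (h𝒵 : IsResolving R 𝒵)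
    (hZY : ∀ Z ∈ 𝒵, ∀ Y ∈ 𝒴, Subsingleton (Ext Z Y 1)) : 𝒵 ⋆ 𝒴 ⋆ (𝒵 ⋆ 𝒴) ⊆ 𝒵 ⋆ 𝒴 :=
  calc
    𝒵 ⋆ 𝒴 ⋆ (𝒵 ⋆ 𝒴) = 𝒵 ⋆ (𝒴 ⋆ 𝒵) ⋆ 𝒴 := by simp only [extensionProduct_assoc]
    _ ⊆ 𝒵 ⋆ (𝒵 ⋆ 𝒴) ⋆ 𝒴 :=
      extensionProduct_mono (extensionProduct_mono le_rfl (extensionProduct_subset_swap hZY)) le_rfl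
    _ = 𝒵 ⋆ 𝒵 ⋆ (𝒴 ⋆ 𝒴) := by simp only [extensionProduct_assoc]
    _ ⊆ 𝒵 ⋆ 𝒴 :=
      extensionProduct_mono h𝒵.extensionProduct_self_subset h𝒴.extensionProduct_self_subset

end IsResolving

theorem extensionProduct_subset_summandClosure : 𝒳 ⋆ 𝒴 ⊆ summandClosure (𝒳 ⋆ 𝒴) := fun M hM =>
  ⟨ModuleCat.of R PUnit, mem_extensionProduct_of_linearEquiv
    (N := ModuleCat.of R (M × PUnit.{u + 1})) LinearEquiv.prodUnique.symm hM⟩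

theorem mem_summandClosure_of_prod_mem
    (h : ModuleCat.of R (M × N) ∈ summandClosure (𝒳 ⋆ 𝒴)) : M ∈ summandClosure (𝒳 ⋆ 𝒴) := by
  obtain ⟨N', hN'⟩ := h
  exact ⟨ModuleCat.of R (N × N'), mem_extensionProduct_of_linearEquiv
    (N := ModuleCat.of R (M × (N × N'))) (LinearEquiv.prodAssoc R M N N') hN'⟩

theorem mem_summandClosure_of_extension (h𝒳 : 𝒳 ⋆ 𝒳 ⊆ 𝒳) {A B C : ModuleCat.{u} R}
    {f : A →ₗ[R] B} {g : B →ₗ[R] C} (hfg : IsSES f g) (hA : A ∈ summandClosure 𝒳)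
    (hC : C ∈ summandClosure 𝒳) : B ∈ summandClosure 𝒳 := by
  obtain ⟨N₁, hN₁⟩ := hA
  obtain ⟨N₂, hN₂⟩ := hC
  exact ⟨ModuleCat.of R (N₁ × N₂), h𝒳 ⟨_, hN₁, _, hN₂, _, _, hfg.prodMap IsSES.inl_snd⟩⟩

namespace IsResolving

theorem union_subset_summandClosure (h𝒴 : IsResolving R 𝒴) (h𝒵 : IsResolving R 𝒵) :
    𝒴 ∪ 𝒵 ⊆ summandClosure (𝒵 ⋆ 𝒴) :=
  (Set.union_subset h𝒵.subset_extensionProduct_right h𝒴.subset_extensionProduct_left).trans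
    extensionProduct_subset_summandClosure

variable [IsNoetherianRing R]

theorem mem_summandClosure_of_syzygy_extensionProduct (h𝒴 : IsResolving R 𝒴)
    (h𝒵 : IsResolving R 𝒵) {K P E : ModuleCat.{u} R} {f : K →ₗ[R] P} {g : P →ₗ[R] E}
    (hfg : IsSES f g) [hP : Module.Finite R P] [hP' : Module.Projective R P] (hE : E ∈ 𝒵 ⋆ 𝒴) :
    K ∈ summandClosure (𝒵 ⋆ 𝒴) := by
  obtain ⟨Z, hZ, Y, hY, i, p, hip⟩ := hE
  obtain ⟨L, a, b, j, hab, hj⟩ := hfg.exists_ker_comp hip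
  have hL : L ∈ 𝒴 :=
    h𝒴.syzygy_closed L P Y j _ hj (Module.Finite.of_injective j hj.1) hP hP' hY
  obtain ⟨Ω, hΩ, F, k, q, hkq, -, hF⟩ := h𝒵.exists_syzygy hZ
  -- `W` is the pullback of `K → Z ← F`: it splits as `K × F`, and it is an extension of `L` by `Ω`.
  obtain ⟨W, c, d, c', d', hcd, hcd'⟩ := hab.exists_fiberProduct hkq
  obtain ⟨s, hs⟩ := Module.projective_lifting_property d LinearMap.id hcd.2.1
  obtain ⟨e, -⟩ := hcd.exact.splitSurjectiveEquiv hcd.1 ⟨s, hs⟩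
  exact ⟨F, mem_extensionProduct_of_linearEquiv (N := ModuleCat.of R (K × F)) e
    ⟨Ω, hΩ, L, hL, c', d', hcd'⟩⟩

theorem finite_of_mem_extensionProduct (h𝒴 : IsResolving R 𝒴) (h𝒵 : IsResolving R 𝒵)
    (hM : M ∈ 𝒵 ⋆ 𝒴) : Module.Finite R M := by
  obtain ⟨Z, hZ, Y, hY, f, g, hfg⟩ := hM
  have := h𝒵.fg Z hZ
  have := h𝒴.fg Y hY
  have := isNoetherian_of_range_eq_ker f g hfg.2.2
  infer_instance

theorem summandClosure_extensionProduct (h𝒴 : IsResolving R 𝒴) (h𝒵 : IsResolving R 𝒵)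
    (hZY : ∀ Z ∈ 𝒵, ∀ Y ∈ 𝒴, Subsingleton (Ext Z Y 1)) :
    IsResolving R (summandClosure (𝒵 ⋆ 𝒴)) where
  fg M := fun ⟨N, hMN⟩ => by
    have := finite_of_mem_extensionProduct h𝒴 h𝒵 hMN
    exact Module.Finite.of_surjective (LinearMap.fst R M N) LinearMap.fst_surjective
  iso_closed M M' := fun ⟨e⟩ ⟨N, hMN⟩ =>
    ⟨N, mem_extensionProduct_of_linearEquiv (N := ModuleCat.of R (M' × N))
      (e.prodCongr (LinearEquiv.refl R N)) hMN⟩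
  proj_mem M hM hM' := ⟨M, h𝒴.subset_extensionProduct_left
    (h𝒵.proj_mem (ModuleCat.of R (M × M)) inferInstance inferInstance)⟩
  summand_closed _ _ := mem_summandClosure_of_prod_mem
  ext_closed A B C f g hfg hA hC := mem_summandClosure_of_extension
    (h𝒴.extensionProduct_extensionProduct_subset h𝒵 hZY) hfg hA hC
  syzygy_closed K P M f g hfg _ hP hP' := fun ⟨N, hMN⟩ => by
    have := finite_of_mem_extensionProduct h𝒴 h𝒵 hMN
    have : Module.Finite R N :=
      Module.Finite.of_surjective (LinearMap.snd R M N) LinearMap.snd_surjective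
    obtain ⟨n, q, hq⟩ := Module.Finite.exists_fin' R N
    exact mem_summandClosure_of_prod_mem (N := ModuleCat.of R (LinearMap.ker q))
      (h𝒴.mem_summandClosure_of_syzygy_extensionProduct h𝒵
        (K := ModuleCat.of R (K × LinearMap.ker q)) (P := ModuleCat.of R (P × (Fin n → R)))
        (E := ModuleCat.of R (M × N)) (hfg.prodMap (IsSES.of_surjective hq)) hMN)

end IsResolving

theorem IsResolving.mem_of_mem_summandClosure_of_embedding (h𝒴 : IsResolving R 𝒴)
    (hM : M ∈ summandClosure (𝒵 ⋆ 𝒴))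
    (h : ∀ Z ∈ 𝒵, ∃ (F C : ModuleCat.{u} R) (f : Z →ₗ[R] F) (g : F →ₗ[R] C), IsSES f g ∧
      Module.Finite R F ∧ Module.Projective R F ∧ Subsingleton (Ext C M 1)) : M ∈ 𝒴 := by
  obtain ⟨N, Z, hZ, Y, hY, i, p, hip⟩ := hM
  obtain ⟨F, C, f, g, hfg, hF, hF', hC⟩ := h Z hZ
  obtain ⟨W, a, b, c, d, hab, hcd⟩ := hip.exists_amalgamatedSum hfg
  have hW : W ∈ 𝒴 := h𝒴.ext_closed F W Y a b hab (h𝒴.proj_mem F hF hF') hY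
  obtain ⟨r, hr⟩ := hcd.exists_extension hC (LinearMap.fst R M N)
  refine h𝒴.mem_of_comp_eq_id (s := c ∘ₗ LinearMap.inl R M N) (r := r) ?_ hW
  rw [← LinearMap.comp_assoc, hr, LinearMap.fst_comp_inl]

theorem IsResolving.mem_of_mem_summandClosure_of_cover (h𝒵 : IsResolving R 𝒵)
    (hM : M ∈ summandClosure (𝒵 ⋆ 𝒴))
    (h : ∀ Y ∈ 𝒴, ∃ (K F : ModuleCat.{u} R) (f : K →ₗ[R] F) (g : F →ₗ[R] Y), IsSES f g ∧
      Module.Finite R F ∧ Module.Projective R F ∧ Subsingleton (Ext M K 1)) : M ∈ 𝒵 := by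
  obtain ⟨N, Z, hZ, Y, hY, i, p, hip⟩ := hM
  obtain ⟨K, F, f, g, hfg, hF, hF', hK⟩ := h Y hY
  obtain ⟨W, a, b, c, d, hab, hcd⟩ := hip.exists_fiberProduct hfg
  have hW : W ∈ 𝒵 := h𝒵.ext_closed Z W F a b hab hZ (h𝒵.proj_mem F hF hF')
  obtain ⟨s, hs⟩ := hcd.exists_lift hK (LinearMap.inl R M N)
  refine h𝒵.mem_of_comp_eq_id (s := s) (r := LinearMap.fst R M N ∘ₗ d) ?_ hW
  rw [LinearMap.comp_assoc, hs, LinearMap.fst_comp_inl]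

end Extensions

/-- Proposition 6.3: over a Gorenstein ring, resolving subcategories `𝒴 ⊆ PD(R)` and
`𝒵 ⊆ MCM(R)` are recovered from `res (𝒴 ∪ 𝒵)`. -/
theorem gorenstein_recover_parts [IsNoetherianRing R]
    (hGor : ∀ p : PrimeSpectrum R, ∃ n : ℕ,
      idLE (Localization.AtPrime p.asIdeal) n
        (ModuleCat.of (Localization.AtPrime p.asIdeal) (Localization.AtPrime p.asIdeal)))
    (𝒴 𝒵 : Set (ModuleCat.{u} R))
    (h𝒴 : IsResolving R 𝒴) (hY : 𝒴 ⊆ PDcat R)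
    (h𝒵 : IsResolving R 𝒵) (hZ : 𝒵 ⊆ MCMcat R) :
    𝒴 = resClosure R (𝒴 ∪ 𝒵) ∩ PDcat R ∧
    𝒵 = resClosure R (𝒴 ∪ 𝒵) ∩ MCMcat R := by
  have hG : IsGorenstein R := hGor
  have hunion : 𝒴 ∪ 𝒵 ⊆ resClosure R (𝒴 ∪ 𝒵) := Set.subset_sInter fun _ h => h.2
  have hclosure : resClosure R (𝒴 ∪ 𝒵) ⊆ summandClosure (extensionProduct 𝒵 𝒴) :=
    Set.sInter_subset_of_mem ⟨h𝒴.summandClosure_extensionProduct h𝒵 fun Z hZ' Y hY' =>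
      subsingleton_ext_of_mem_PDcat (hG.subsingleton_ext_of_mem_MCMcat (hZ hZ')) (hY hY') 0,
      h𝒴.union_subset_summandClosure h𝒵⟩
  constructor
  · refine (Set.subset_inter (Set.subset_union_left.trans hunion) hY).antisymm ?_
    rintro M ⟨hM, hMpd⟩
    refine h𝒴.mem_of_mem_summandClosure_of_embedding (hclosure hM) fun Z hZ' => ?_
    obtain ⟨F, C, f, g, hfg, hF, hF', hC⟩ := hG.exists_isSES_of_mem_MCMcat (hZ hZ')
    exact ⟨F, C, f, g, hfg, hF, hF', subsingleton_ext_of_mem_PDcat hC hMpd 0⟩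
  · refine (Set.subset_inter (Set.subset_union_right.trans hunion) hZ).antisymm ?_
    rintro M ⟨hM, hMmcm⟩
    refine h𝒵.mem_of_mem_summandClosure_of_cover (hclosure hM) fun Y hY' => ?_
    obtain ⟨K, hK, F, f, g, hfg, hF, hF'⟩ := h𝒴.exists_syzygy hY'
    exact ⟨K, F, f, g, hfg, hF, hF', subsingleton_ext_of_mem_PDcat
      (hG.subsingleton_ext_of_mem_MCMcat hMmcm) (hY hK) 0⟩

end ResolvPaper
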